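/- If σ = σ₁…σ_N is a legal sequence of moves in the auxiliary game and for some index k the pair σ_k σ_{k+1} is a repetition (that is, the resulting position of σ_{k+1} equals the initial position of σ_k), then the sequence obtained from σ by deleting σ_k and σ_{k+1} is legal, has the same initial and resulting positions as σ, and has the same flow F through every vertex of G as σ. -/

import Mathlib

/-!
The auxiliary game of Shitov, "Chess God's number grows exponentially".

Fix `m ≥ 1`.  The graph `G` has cycle vertices `(0,t)` for `t ∈ ℤ/3m` and triangle
vertices `(i,j)` for `1 ≤ i ≤ m`, `j ∈ {1,2,3}`.  We use 0-based indices: the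
triangle vertex `(i,j)` of the paper (with `1 ≤ i ≤ m`, `1 ≤ j ≤ 3`) is
`Vtx.tri ⟨i-1⟩ ⟨j-1⟩`, and its paired cycle vertex `(0, 3i+j-3)` is
`Vtx.cycle (pairC ⟨i-1⟩ ⟨j-1⟩)` where `pairC i j = 3*i + j + 1 (mod 3m)`.
-/

namespace AuxGame

/-- What occupies a vertex: nothing, the chip, or a switch. -/
inductive Occ : Type
  | empty : Occ
  | chip : Occ
  | switch : Occ
deriving DecidableEq

/-- Vertices of the graph `G`: the big cycle of length `3m`, and `m` triangles. -/
inductive Vtx (m : ℕ) : Type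
  | cycle : ZMod (3 * m) → Vtx m
  | tri : Fin m → ZMod 3 → Vtx m
deriving DecidableEq

/-- The cycle vertex paired with the triangle vertex `(i,j)` (0-based):
this is the vertex `(0, 3i+j-3)` of the paper. -/
def pairC {m : ℕ} (i : Fin m) (j : ZMod 3) : ZMod (3 * m) :=
  ((3 * i.val + j.val + 1 : ℕ) : ZMod (3 * m))

/-- Adjacency in `G`: consecutive vertices of the big cycle, and distinct
vertices of one triangle. -/
def Adjacent {m : ℕ} : Vtx m → Vtx m → Prop
  | .cycle t, .cycle t' => t' = t + 1 ∨ t' = t - 1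
  | .tri i j, .tri i' j' => i = i' ∧ j ≠ j'
  | _, _ => False

/-- `u` and `v` form a pair `{(i,j), (0,3i+j-3)}` (in either order). -/
def IsPair {m : ℕ} : Vtx m → Vtx m → Prop
  | .tri i j, .cycle t => t = pairC i j
  | .cycle t, .tri i j => t = pairC i j
  | _, _ => False

/-- A position of the auxiliary game: every vertex is empty, or carries the chip,
or carries (exactly) one switch; there is exactly one chip; and for every pair
`{(i,j), (0,3i+j-3)}` at least one of the two vertices carries a switch. -/
structure Pos (m : ℕ) where
  occ : Vtx m → Occ
  chip_exists_unique : ∃! v : Vtx m, occ v = Occ.chip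
  switch_pair : ∀ (i : Fin m) (j : ZMod 3),
    occ (Vtx.tri i j) = Occ.switch ∨ occ (Vtx.cycle (pairC i j)) = Occ.switch

/-- A single move: the chip moves from vertex `from'` to vertex `to'`,
transforming position `src` into position `dst`. -/
structure Move (m : ℕ) where
  src : Pos m
  dst : Pos m
  from' : Vtx m
  to' : Vtx m

/-- Legality of a single move: either a *jump* (the chip moves to an adjacent
vacant vertex of its triangle, or to an adjacent vacant vertex of the cycle),
or a *swap* (the chip, standing on one vertex of a pair, is exchanged with the
switch on the other vertex of that pair).  In both cases the destination gets
the chip, the source gets whatever was at the destination (nothing for a jump,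
the switch for a swap), and all other vertices are unchanged. -/
def Move.Legal {m : ℕ} (mv : Move m) : Prop :=
  mv.src.occ mv.from' = Occ.chip ∧
  ((Adjacent mv.from' mv.to' ∧ mv.src.occ mv.to' = Occ.empty) ∨
    (IsPair mv.from' mv.to' ∧ mv.src.occ mv.to' = Occ.switch)) ∧
  mv.dst.occ mv.to' = Occ.chip ∧
  mv.dst.occ mv.from' = mv.src.occ mv.to' ∧
  ∀ w : Vtx m, w ≠ mv.from' → w ≠ mv.to' → mv.dst.occ w = mv.src.occ w

/-- `Leads σ A B`: `σ` is a legal sequence of moves with initial position `A`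
and resulting position `B` (each move is legal, and the resulting position of
each move is the initial position of the next one). -/
inductive Leads {m : ℕ} : List (Move m) → Pos m → Pos m → Prop
  | nil (A : Pos m) : Leads [] A A
  | cons (mv : Move m) (σ : List (Move m)) (B : Pos m) :
      mv.Legal → Leads σ mv.dst B → Leads (mv :: σ) mv.src B

/-- `σ` is a legal sequence of moves. -/
def LegalSeq {m : ℕ} (σ : List (Move m)) : Prop :=
  ∃ A B : Pos m, Leads σ A B

/-- `#(σ, u, v)`: the number of single moves in `σ` carrying the chip from
vertex `u` to vertex `v` (used with `u`, `v` in one component, where such moves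
are exactly jumps). -/
def jmpCount {m : ℕ} (σ : List (Move m)) (u v : Vtx m) : ℕ :=
  (σ.filter fun mv => decide (mv.from' = u ∧ mv.to' = v)).length

/-- The successor of a vertex in its own component: `(0,t) ↦ (0,t+1)` and
`(i,j) ↦ (i,j+1 mod 3)`. -/
def nxt {m : ℕ} : Vtx m → Vtx m
  | .cycle t => .cycle (t + 1)
  | .tri i j => .tri i (j + 1)

/-- The predecessor of a vertex in its own component. -/
def prv {m : ℕ} : Vtx m → Vtx m
  | .cycle t => .cycle (t - 1)
  | .tri i j => .tri i (j - 1)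

/-- Twice the flow through a vertex `v = (i₀,j₀)`:
`#(σ,i₀,j₀-1,j₀) + #(σ,i₀,j₀,j₀+1) - #(σ,i₀,j₀+1,j₀) - #(σ,i₀,j₀,j₀-1)` as an integer. -/
def dflow {m : ℕ} (σ : List (Move m)) (v : Vtx m) : ℤ :=
  (jmpCount σ (prv v) v : ℤ) + (jmpCount σ v (nxt v) : ℤ)
    - (jmpCount σ (nxt v) v : ℤ) - (jmpCount σ v (prv v) : ℤ)

/-- The flow `F(σ, i₀, j₀)` through the vertex `v = (i₀,j₀)`. -/
def flow {m : ℕ} (σ : List (Move m)) (v : Vtx m) : ℚ :=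
  (dflow σ v : ℚ) / 2

/-- `P` is the starting position: switches on `(i,1)`, `(i,3)`, `(0,3i-1)`
(0-based: `tri i 0`, `tri i 2`, `cycle (pairC i 1)`), the chip on some cycle
vertex not of the form `(0,3i-1)`, and all other vertices empty. -/
def IsStarting {m : ℕ} (P : Pos m) : Prop :=
  (∀ i : Fin m,
    P.occ (Vtx.tri i 0) = Occ.switch ∧
    P.occ (Vtx.tri i 1) = Occ.empty ∧
    P.occ (Vtx.tri i 2) = Occ.switch ∧
    P.occ (Vtx.cycle (pairC i 1)) = Occ.switch) ∧
  ∃ t : ZMod (3 * m),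
    (∀ i : Fin m, t ≠ pairC i 1) ∧
    P.occ (Vtx.cycle t) = Occ.chip ∧
    ∀ s : ZMod (3 * m), s ≠ t → (∀ i : Fin m, s ≠ pairC i 1) →
      P.occ (Vtx.cycle s) = Occ.empty

end AuxGame

namespace AuxGame

theorem jmpCount_append' {m : ℕ} (σ τ : List (Move m)) (u v : Vtx m) :
    jmpCount (σ ++ τ) u v = jmpCount σ u v + jmpCount τ u v := by
  simp [jmpCount, List.filter_append]

theorem jmpCount_pair' {m : ℕ} (a b : Move m) (h1 : b.from' = a.to') (h2 : b.to' = a.from')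
    (u v : Vtx m) : jmpCount [a, b] u v = jmpCount [a, b] v u := by
  unfold jmpCount
  simp only [List.filter_cons, List.filter_nil, h1, h2]
  by_cases p : a.from' = u ∧ a.to' = v <;> by_cases q : a.from' = v ∧ a.to' = u <;>
    simp [p, q, and_comm] <;> grind

theorem leads_del {m : ℕ} (β : List (Move m)) (a b : Move m) (hrep : b.dst = a.src) (B : Pos m) :
    ∀ (α : List (Move m)) (A : Pos m), Leads (α ++ a :: b :: β) A B →
      Leads (α ++ β) A B ∧ a.Legal ∧ b.Legal ∧ a.dst = b.src := by
  intro α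
  induction α with
  | nil =>
    intro A h
    simp only [List.nil_append] at h ⊢
    cases h with
    | cons _ _ _ ha h =>
      generalize hP : a.dst = P at h
      cases h with
      | cons _ _ _ hb h => exact ⟨hrep ▸ h, ha, hb, rfl⟩
  | cons c α ih =>
    intro A h
    simp only [List.cons_append] at h ⊢
    cases h with
    | cons _ _ _ hc h =>
      obtain ⟨h1, h2⟩ := ih _ h
      exact ⟨Leads.cons _ _ _ hc h1, h2⟩

end AuxGame

open AuxGame in
/-- If a legal sequence `σ = α ++ a :: b :: β` contains a
repetition `a b` (i.e. the resulting position of `b` equals the initial position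
of `a`), then deleting the two moves `a`, `b` yields a legal sequence with the
same initial and resulting positions and the same flow through every vertex. -/
theorem statement3 (m : ℕ) (hm : 1 ≤ m) (A B : Pos m)
    (α β : List (Move m)) (a b : Move m)
    (hσ : Leads (α ++ a :: b :: β) A B) (hrep : b.dst = a.src) :
    Leads (α ++ β) A B ∧
      ∀ v : Vtx m, flow (α ++ β) v = flow (α ++ a :: b :: β) v := by
  obtain ⟨hL, ha, hb, hab⟩ := leads_del β a b hrep B α A hσ
  refine ⟨hL, fun v => ?_⟩
  have h1 : b.from' = a.to' :=
    b.src.chip_exists_unique.unique hb.1 (hab ▸ ha.2.2.1)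
  have h2 : b.to' = a.from' :=
    a.src.chip_exists_unique.unique (hrep ▸ hb.2.2.1) ha.1
  have e : α ++ a :: b :: β = α ++ ([a, b] ++ β) := rfl
  have k1 := jmpCount_pair' a b h1 h2 v (nxt v)
  have k2 := jmpCount_pair' a b h1 h2 v (prv v)
  rw [e]
  unfold flow dflow
  simp only [jmpCount_append', k1, k2]
  push_cast
  ring
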